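/- Let G₁ be an r₁-regular graph on n₁ vertices and m₁ edges, and G₂ an r₂-regular graph on n₂ vertices, and let α ∈ [0,1]. (1) If r₁ = 1, then the A_α-spectrum of the subdivision-edge join G₁ ∨̲ G₂ consists precisely of: α; the values α + λ_i(A_α(G₂)) for i = 2,…,n₂; and the three roots of F(x) = (x−α−r₂)(x² − α(3+n₂)x + (α²n₂+4α−2)) − n₂(1−α)²(x−α). (2) If r₁ ≥ 2, then the A_α-spectrum of G₁ ∨̲ G₂ consists precisely of: α(2+n₂) repeated m₁−n₁ times; αm₁ + λ_i(A_α(G₂)) for i = 2,…,n₂; the two roots of G_i(x) = x² − α(2+r₁+n₂)x + (α²r₁n₂+3αr₁−r₁) − (1−α)λ_i(A_α(G₁)) for each i = 2,…,n₁; and the three roots of F(x) = (x−αm₁−r₂)(x² − α(2+r₁+n₂)x + r₁(α²n₂+4α−2)) − m₁n₂(1−α)²(x−αr₁). -/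

import Mathlib

open Matrix Polynomial
open scoped Classical

noncomputable section

/-- `A_α(G) = α·D(G) + (1-α)·A(G)`, where `D(G)` is the diagonal degree matrix and
`A(G)` the adjacency matrix. -/
def Aalpha {V : Type*} [Fintype V] (G : SimpleGraph V) (α : ℝ) : Matrix V V ℝ :=
  α • Matrix.diagonal (fun v => (G.degree v : ℝ)) + (1 - α) • G.adjMatrix ℝ

/-- The subdivision-edge join `G₁ ∨̲ G₂`: take the subdivision graph `S(G₁)` (a new
vertex inserted in each edge of `G₁`) together with `G₂`, and join every inserted
vertex of `S(G₁)` with every vertex of `G₂`. -/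
def subdivisionEdgeJoin {V₁ V₂ : Type*} (G₁ : SimpleGraph V₁) (G₂ : SimpleGraph V₂) :
    SimpleGraph (V₁ ⊕ (↥G₁.edgeSet ⊕ V₂)) :=
  SimpleGraph.fromRel fun a b =>
    match a, b with
    | Sum.inl v, Sum.inr (Sum.inl e) => v ∈ (e : Sym2 V₁)
    | Sum.inr (Sum.inl _), Sum.inr (Sum.inr _) => True
    | Sum.inr (Sum.inr u), Sum.inr (Sum.inr w) => G₂.Adj u w
    | _, _ => False

/-!
On the inserted vertices the characteristic matrix of the join is the scalar `x - α (2 + n₂)`, so a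
Schur complement, written without division, eliminates them. What remains are the blocks
`(x - α r₁) (x - α (2 + n₂)) - (1 - α)² B Bᵀ` on `G₁`, with `B` the vertex-edge incidence matrix,
and a scalar multiple of `x - α m₁ - A_α(G₂)` on `G₂`, changed only by rank-one terms in the
all-ones vectors. Regularity makes these vectors eigenvectors of both blocks, so the rank-one terms
affect no other eigenvalue: the two top eigenvalues merge into the cubic `F`. As `B Bᵀ = D + A`,
the matrix `(1 - α)² B Bᵀ` is affine in `A_α(G₁)`, and its other eigenvalues give the quadratics
`G_i`. The elimination leaves the factor `(x - α (2 + n₂)) ^ (m₁ - n₁)`, of exponent `-1` when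
`G₁ = K₂`; there the second eigenvalue of `A_α(G₁)` is `2 α - 1`, and
`G_2 = (x - α) (x - α (2 + n₂))` absorbs it.
-/

section BlockDeterminants

variable {R : Type*} [CommRing R] {m n l : Type*} [Fintype m] [Fintype n] [Fintype l]
  [DecidableEq m] [DecidableEq n] [DecidableEq l]

lemma pow_card_mul_det_fromBlocks_of_mul_eq_smul {A : Matrix m m R} {B : Matrix m n R} {p : R}
    (h : A * B = p • B) (C : Matrix n m R) (D : Matrix n n R) :
    p ^ Fintype.card n * (fromBlocks A B C D).det = A.det * (p • D - C * B).det := by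
  have eliminate : fromBlocks A B C D * fromBlocks 1 (-B) 0 (p • 1) =
      fromBlocks A 0 C (p • D - C * B) := by
    simp [fromBlocks_multiply, h, sub_eq_neg_add]
  have := congrArg det eliminate
  rwa [det_mul, det_fromBlocks_zero₂₁, det_fromBlocks_zero₁₂, det_smul, det_one, det_one, one_mul,
    mul_one, mul_comm] at this

lemma mul_det_add_vecMulVec_of_mulVec_eq_smul {P : Matrix m m R} {u : m → R} {p : R}
    (hu : P *ᵥ u = p • u) (v : m → R) :
    p * (P + vecMulVec u v).det = (p + v ⬝ᵥ u) * P.det := by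
  have hcol : P * replicateCol Unit u = p • replicateCol Unit u := by
    rw [← replicateCol_mulVec, hu, replicateCol_smul]
  have h := pow_card_mul_det_fromBlocks_of_mul_eq_smul hcol (-replicateRow Unit v) 1
  rw [det_fromBlocks_one₂₂, Matrix.mul_neg, sub_neg_eq_add, ← vecMulVec_eq] at h
  simpa [det_unique, mul_comm] using h

lemma mul_det_fromBlocks_vecMulVec {P : Matrix m m R} {N : Matrix n n R} {u : m → R} {u' : n → R}
    {p s : R} (hp : IsLeftRegular p) (hP : P *ᵥ u = p • u) (hN : N *ᵥ u' = s • u')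
    (v : m → R) (w z : n → R) :
    p * s * (fromBlocks P (vecMulVec u w) (vecMulVec u' v) (N + vecMulVec u' z)).det =
      (p * (s + z ⬝ᵥ u') - v ⬝ᵥ u * (w ⬝ᵥ u')) * (P.det * N.det) := by
  have hPu : P * vecMulVec u w = p • vecMulVec u w := by rw [mul_vecMulVec, hP, smul_vecMulVec]
  have schur := pow_card_mul_det_fromBlocks_of_mul_eq_smul hPu (vecMulVec u' v)
    (N + vecMulVec u' z)
  have rank_one : p • (N + vecMulVec u' z) - vecMulVec u' v * vecMulVec u w =
      p • N + vecMulVec u' (p • z - (v ⬝ᵥ u) • w) := by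
    rw [vecMulVec_mul_vecMulVec, vecMulVec_sub, vecMulVec_smul, vecMulVec_smul, smul_add]
    abel
  have hpN : (p • N) *ᵥ u' = (p * s) • u' := by rw [smul_mulVec, hN, smul_smul]
  have update := mul_det_add_vecMulVec_of_mulVec_eq_smul hpN (p • z - (v ⬝ᵥ u) • w)
  rw [det_smul, sub_dotProduct, smul_dotProduct, smul_dotProduct, smul_eq_mul, smul_eq_mul]
    at update
  rw [rank_one] at schur
  apply hp.pow (Fintype.card n)
  linear_combination (p * s) * schur + P.det * update

omit [DecidableEq m] [DecidableEq n] in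
lemma card_mul_eq_card_mul_of_mulVec_one {B : Matrix m n R} {ρ k : R}
    (hB : B *ᵥ 1 = ρ • 1) (hBt : Bᵀ *ᵥ 1 = k • 1) :
    Fintype.card m * ρ = Fintype.card n * k := by
  have h : (1 : m → R) ⬝ᵥ B *ᵥ 1 = Bᵀ *ᵥ 1 ⬝ᵥ 1 := by rw [dotProduct_mulVec, mulVec_transpose]
  simpa [hB, hBt, mul_comm] using h

/-- The common shape of `A_α` and of its characteristic matrix for a subdivision-edge join: rows are
indexed by old vertices, inserted vertices and joined vertices, `B` is the vertex-edge incidence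
matrix scaled by `c`, and `N` is the block of the joined graph. -/
def incidenceJoin (a b c : R) (B : Matrix m n R) (N : Matrix l l R) :
    Matrix (m ⊕ (n ⊕ l)) (m ⊕ (n ⊕ l)) R :=
  fromBlocks (a • 1) (fromCols (c • B) 0) (fromRows (c • Bᵀ) 0)
    (fromBlocks (b • 1) (c • vecMulVec 1 1) (c • vecMulVec 1 1) N)

omit [DecidableEq l] in
lemma incidenceJoin_mulVec_one (a b c : R) (B : Matrix m n R) (N : Matrix l l R) :
    incidenceJoin a b c B N *ᵥ 1 =
      Sum.elim (a • 1 + c • B *ᵥ 1) (Sum.elim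
        (c • Bᵀ *ᵥ 1 + (b • 1 + c • (Fintype.card l : R) • 1))
        (c • (Fintype.card n : R) • 1 + N *ᵥ 1)) := by
  have h : fromBlocks (b • (1 : Matrix n n R)) (c • vecMulVec 1 1) (c • vecMulVec 1 1) N *ᵥ 1 =
      Sum.elim (b • 1 + c • (Fintype.card l : R) • 1)
        (c • (Fintype.card n : R) • 1 + N *ᵥ 1) := by
    rw [← Sum.elim_one_one, fromBlocks_mulVec, Sum.elim_comp_inl, Sum.elim_comp_inr]
    ext (i | i) <;> simp [-vecMulVec_one, -one_vecMulVec, smul_mulVec, vecMulVec_mulVec]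
  rw [incidenceJoin, ← Sum.elim_one_one, fromBlocks_mulVec, Sum.elim_comp_inr, h]
  ext (i | i | i) <;> simp [smul_mulVec]

lemma pow_card_mul_det_incidenceJoin (a b c : R) (B : Matrix m n R) (N : Matrix l l R) :
    b ^ (Fintype.card m + Fintype.card l) * (incidenceJoin a b c B N).det =
      b ^ Fintype.card n *
        (fromBlocks ((a * b) • 1 - c ^ 2 • (B * Bᵀ)) (vecMulVec (B *ᵥ 1) (-c ^ 2 • 1))
          (vecMulVec 1 (-c ^ 2 • B *ᵥ 1))
          (b • N + vecMulVec 1 (-(c ^ 2 * Fintype.card n) • 1))).det := by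
  let e : n ⊕ (m ⊕ l) ≃ m ⊕ (n ⊕ l) :=
    (Equiv.sumAssoc n m l).symm.trans
      (((Equiv.sumComm n m).sumCongr (Equiv.refl l)).trans (Equiv.sumAssoc m n l))
  have reorder : (incidenceJoin a b c B N).submatrix e e =
      fromBlocks (b • 1) (fromCols (c • Bᵀ) (c • vecMulVec 1 1))
        (fromRows (c • B) (c • vecMulVec 1 1)) (fromBlocks (a • 1) 0 0 N) := by
    ext (i | i | i) (j | j | j) <;> rfl
  rw [← det_submatrix_equiv_self e, reorder, ← Fintype.card_sum,
    pow_card_mul_det_fromBlocks_of_mul_eq_smul (p := b) (by simp), det_smul, det_one, mul_one,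
    fromRows_mul_fromCols, fromBlocks_smul, sub_eq_add_neg, fromBlocks_neg, fromBlocks_add]
  congr 3
  · simp [sub_eq_add_neg, smul_smul, sq, mul_comm]
  · simp [-vecMulVec_one, -one_vecMulVec, smul_smul, sq, mul_vecMulVec, smul_mulVec, smul_vecMulVec]
  · simp [-vecMulVec_one, -one_vecMulVec, smul_smul, sq, vecMulVec_mul, vecMul_transpose]
  · simp [-vecMulVec_one, -one_vecMulVec, smul_smul, sq, vecMulVec_mul_vecMulVec, mul_assoc]

lemma pow_card_mul_det_incidenceJoin_of_mulVec_one {a b c ρ k s : R} {B : Matrix m n R}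
    {N : Matrix l l R} (hb : IsLeftRegular b) (hp : IsLeftRegular (a * b - c ^ 2 * (k * ρ)))
    (hB : B *ᵥ 1 = ρ • 1) (hBt : Bᵀ *ᵥ 1 = k • 1) (hN : N *ᵥ 1 = s • 1) :
    b ^ Fintype.card m * ((a * b - c ^ 2 * (k * ρ)) * s * (incidenceJoin a b c B N).det) =
      b ^ Fintype.card n *
        (((a * b - c ^ 2 * (k * ρ)) * s - c ^ 2 * (Fintype.card n * Fintype.card l) * a) *
          (((a * b) • 1 - c ^ 2 • (B * Bᵀ)).det * N.det)) := by
  have hP : ((a * b) • 1 - c ^ 2 • (B * Bᵀ)) *ᵥ 1 = (a * b - c ^ 2 * (k * ρ)) • 1 := by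
    rw [sub_mulVec, smul_mulVec, smul_mulVec, one_mulVec, ← mulVec_mulVec, hBt, mulVec_smul, hB,
      smul_smul, smul_smul, mul_assoc, sub_smul]
  have hbN : (b • N) *ᵥ 1 = (b * s) • 1 := by rw [smul_mulVec, hN, smul_smul]
  have schur := pow_card_mul_det_incidenceJoin a b c B N
  have blocks := mul_det_fromBlocks_vecMulVec hp hP hbN (-c ^ 2 • ρ • 1) (ρ • -c ^ 2 • 1)
    (-(c ^ 2 * Fintype.card n) • 1)
  have handshake := card_mul_eq_card_mul_of_mulVec_one hB hBt
  simp only [smul_dotProduct, one_dotProduct_one, smul_eq_mul, det_smul] at blocks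
  rw [hB, smul_vecMulVec, ← vecMulVec_smul] at schur
  apply hb.pow (Fintype.card l + 1)
  linear_combination ((a * b - c ^ 2 * (k * ρ)) * b * s) * schur + b ^ Fintype.card n * blocks -
    b ^ Fintype.card n * c ^ 4 * ρ * Fintype.card l *
      (((a * b) • 1 - c ^ 2 • (B * Bᵀ)).det * (b ^ Fintype.card l * N.det)) * handshake

end BlockDeterminants

section Charpoly

variable {m n l : Type*} [Fintype m] [Fintype n] [Fintype l]
  [DecidableEq m] [DecidableEq n] [DecidableEq l]

lemma charmatrix_smul_one {R : Type*} [CommRing R] (t : R) :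
    (t • (1 : Matrix m m R)).charmatrix = (X - C t) • 1 := by
  rw [smul_one_eq_diagonal, charmatrix_diagonal, smul_one_eq_diagonal]

lemma charmatrix_incidenceJoin {R : Type*} [CommRing R] (a b c : R) (B : Matrix m n R)
    (N : Matrix l l R) :
    (incidenceJoin a b c B N).charmatrix =
      incidenceJoin (X - C a) (X - C b) (-C c) (B.map C) N.charmatrix := by
  rw [incidenceJoin, charmatrix_fromBlocks, charmatrix_fromBlocks, charmatrix_smul_one,
    charmatrix_smul_one, incidenceJoin]
  congr 1
  · ext1 i (j | j) <;> simp
  · ext1 (i | i) j <;> simp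
  · congr 1 <;> ext1 <;> simp

omit [Fintype m] [DecidableEq m] [DecidableEq n] in
lemma map_C_mulVec_one {R : Type*} [CommRing R] {A : Matrix m n R} {r : R}
    (h : A *ᵥ 1 = r • 1) : A.map C *ᵥ 1 = C r • 1 := by
  ext1 i
  simpa [h] using (RingHom.map_mulVec C A 1 i).symm

lemma charpoly_incidenceJoin {R : Type*} [CommRing R] [Nontrivial R] (a b c : R) {ρ k s : R}
    {B : Matrix m n R} {N : Matrix l l R}
    (hB : B *ᵥ 1 = ρ • 1) (hBt : Bᵀ *ᵥ 1 = k • 1) (hN : N *ᵥ 1 = s • 1) :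
    (X - C b) ^ Fintype.card m *
        (((X - C a) * (X - C b) - C (c ^ 2 * (k * ρ))) * (X - C s) *
          (incidenceJoin a b c B N).charpoly) =
      (X - C b) ^ Fintype.card n *
        ((((X - C a) * (X - C b) - C (c ^ 2 * (k * ρ))) * (X - C s) -
            C (c ^ 2 * (Fintype.card n * Fintype.card l)) * (X - C a)) *
          ((c ^ 2 • (B * Bᵀ)).charpoly.comp ((X - C a) * (X - C b)) * N.charpoly)) := by
  have hp : ((X - C a) * (X - C b) - C (c ^ 2 * (k * ρ))).Monic := by
    refine ((monic_X_sub_C a).mul (monic_X_sub_C b)).sub_of_left (degree_C_le.trans_lt ?_)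
    rw [(monic_X_sub_C b).degree_mul, degree_X_sub_C, degree_X_sub_C]
    norm_num
  have hcN : N.charmatrix *ᵥ 1 = (X - C s) • 1 := by
    rw [charmatrix, sub_mulVec, RingHom.mapMatrix_apply, map_C_mulVec_one hN, sub_smul]
    simp [← smul_one_eq_diagonal, smul_mulVec]
  have hcomp : (c ^ 2 • (B * Bᵀ)).charpoly.comp ((X - C a) * (X - C b)) =
      (((X - C a) * (X - C b)) • 1 - (-C c) ^ 2 • (B.map C * (B.map C)ᵀ)).det := by
    have hBBt (i j) : (B.map C * (B.map C)ᵀ) i j = C ((B * Bᵀ) i j) := by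
      rw [← transpose_map, ← Matrix.map_mul, map_apply]
    rw [charpoly, ← coe_compRingHom_apply, RingHom.map_det]
    congr 1
    ext1 i j
    by_cases hij : i = j <;> simp [hij, hBBt]
  have h := pow_card_mul_det_incidenceJoin_of_mulVec_one (a := X - C a) (c := -C c)
    (monic_X_sub_C b).isRegular.left (k := C k) (ρ := C ρ) (by simpa using hp.isRegular.left)
    (map_C_mulVec_one hB) (by rw [← transpose_map, map_C_mulVec_one hBt]) hcN
  rw [← charpoly, ← charmatrix_incidenceJoin, ← charpoly, ← hcomp] at h
  simpa using h

lemma card_eq_of_charpoly_eq_prod {R ι : Type*} [CommRing R] [Nontrivial R] {A : Matrix m m R}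
    {s : Finset ι} {μ : ι → R} (h : A.charpoly = ∏ i ∈ s, (X - C (μ i))) :
    Fintype.card m = s.card := by
  simpa using congrArg natDegree h

lemma trace_eq_sum_of_charpoly_eq_prod {R ι : Type*} [CommRing R] [Nontrivial R] {A : Matrix m m R}
    {s : Finset ι} {μ : ι → R} (h : A.charpoly = ∏ i ∈ s, (X - C (μ i))) :
    A.trace = ∑ i ∈ s, μ i := by
  rw [trace_eq_neg_charpoly_nextCoeff, h, prod_X_sub_C_nextCoeff, neg_neg]

lemma charpoly_smul_add_smul_one {K ι : Type*} [Field K] {A : Matrix m m K} {s : Finset ι}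
    {μ : ι → K} (h : A.charpoly = ∏ i ∈ s, (X - C (μ i))) (c t : K) :
    (c • A + t • (1 : Matrix m m K)).charpoly = ∏ i ∈ s, (X - C (c * μ i + t)) := by
  have hcard := card_eq_of_charpoly_eq_prod h
  obtain rfl | hc := eq_or_ne c 0
  · simp [smul_one_eq_diagonal, charpoly_diagonal, hcard]
  have hcc : C c * C c⁻¹ = 1 := by rw [← C_mul, mul_inv_cancel₀ hc, C_1]
  have rescale : (c • A + t • (1 : Matrix m m K)).charmatrix =
      C c • (compRingHom (C c⁻¹ * (X - C t))).mapMatrix A.charmatrix := by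
    ext1 i j
    by_cases hij : i = j
    · subst hij
      simp only [charmatrix_apply_eq, Matrix.add_apply, Matrix.smul_apply, smul_eq_mul,
        one_apply_eq, mul_one, C_add, C_mul, RingHom.mapMatrix_apply, coe_compRingHom, map_apply,
        sub_comp, X_comp, C_comp]
      linear_combination (C t - X) * hcc
    · simp [hij]
  rw [charpoly, rescale, det_smul, ← RingHom.map_det, ← charpoly, h, hcard, map_prod,
    ← Finset.prod_const, ← Finset.prod_mul_distrib]
  refine Finset.prod_congr rfl fun i _ => ?_
  simp only [coe_compRingHom, sub_comp, X_comp, C_comp, C_add, C_mul]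
  linear_combination (X - C t) * hcc

end Charpoly

section Aalpha

lemma adjMatrix_mulVec_one {V R : Type*} [Fintype V] [CommRing R] (G : SimpleGraph V) :
    G.adjMatrix R *ᵥ 1 = fun v => (G.degree v : R) := by
  ext v
  simp [SimpleGraph.adjMatrix_mulVec_apply]

variable {V : Type*} [Fintype V] (G : SimpleGraph V) (α : ℝ)

lemma trace_Aalpha : (Aalpha G α).trace = α * ∑ v, (G.degree v : ℝ) := by
  simp [Aalpha, trace_diagonal, SimpleGraph.trace_adjMatrix, Finset.mul_sum]

lemma Aalpha_mulVec_one : Aalpha G α *ᵥ 1 = fun v => (G.degree v : ℝ) := by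
  rw [Aalpha, add_mulVec, smul_mulVec, smul_mulVec, adjMatrix_mulVec_one]
  ext v
  simp only [Pi.add_apply, Pi.smul_apply, mulVec_diagonal, Pi.one_apply, smul_eq_mul]
  ring

variable {G} {r : ℕ}

lemma Aalpha_mulVec_one_of_isRegularOfDegree (hG : G.IsRegularOfDegree r) :
    Aalpha G α *ᵥ 1 = (r : ℝ) • 1 := by
  ext v
  simp [Aalpha_mulVec_one, hG.degree_eq]

lemma Aalpha_eq_of_isRegularOfDegree [DecidableEq V] (hG : G.IsRegularOfDegree r) :
    Aalpha G α = (α * r) • (1 : Matrix V V ℝ) + (1 - α) • G.adjMatrix ℝ := by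
  ext u v
  simp [Aalpha, hG.degree_eq, one_apply, diagonal_apply]

lemma isRoot_charpoly_Aalpha_degree [DecidableEq V] [Nonempty V] (hG : G.IsRegularOfDegree r) :
    (Aalpha G α).charpoly.IsRoot r := by
  rw [← charpoly_toLin', ← Module.End.hasEigenvalue_iff_isRoot_charpoly]
  refine Module.End.hasEigenvalue_of_hasEigenvector (x := 1) ⟨?_, one_ne_zero⟩
  rw [Module.End.mem_eigenspace_iff, toLin'_apply, Aalpha_mulVec_one_of_isRegularOfDegree α hG]

variable {α}

lemma le_degree_of_isRoot_charpoly_Aalpha [DecidableEq V] (hG : G.IsRegularOfDegree r)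
    (hα : α ≤ 1) {μ : ℝ} (hμ : (Aalpha G α).charpoly.IsRoot μ) : μ ≤ r := by
  rw [← charpoly_toLin', ← Module.End.hasEigenvalue_iff_isRoot_charpoly] at hμ
  obtain ⟨k, hk⟩ := eigenvalue_mem_ball hμ
  have offdiag_nonneg : ∀ j ∈ Finset.univ.erase k, ‖Aalpha G α k j‖ = Aalpha G α k j := by
    intro j hj
    refine Real.norm_of_nonneg ?_
    rw [Aalpha_eq_of_isRegularOfDegree α hG]
    simp only [Matrix.add_apply, Matrix.smul_apply, one_apply_ne (Finset.ne_of_mem_erase hj).symm,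
      smul_eq_mul, mul_zero, zero_add]
    exact mul_nonneg (sub_nonneg.2 hα) (ite_nonneg zero_le_one le_rfl)
  have row_sum : ∑ j, Aalpha G α k j = r := by
    simpa [mulVec, dotProduct] using congrFun (Aalpha_mulVec_one_of_isRegularOfDegree α hG) k
  rw [Finset.sum_congr rfl offdiag_nonneg, Finset.sum_erase_eq_sub (Finset.mem_univ k), row_sum,
    Metric.mem_closedBall, Real.dist_eq] at hk
  linarith [le_abs_self (μ - Aalpha G α k k)]

lemma isGreatest_isRoot_charpoly_Aalpha [DecidableEq V] [Nonempty V]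
    (hG : G.IsRegularOfDegree r) (hα : α ≤ 1) :
    IsGreatest {μ | (Aalpha G α).charpoly.IsRoot μ} r :=
  ⟨isRoot_charpoly_Aalpha_degree α hG, fun _ => le_degree_of_isRoot_charpoly_Aalpha hG hα⟩

end Aalpha

section Fin

lemma apply_zero_eq_of_isGreatest_isRoot {n : ℕ} [NeZero n] {p : ℝ[X]} {μ : Fin n → ℝ} {r : ℝ}
    (hμ : Antitone μ) (hp : p = ∏ i, (X - C (μ i))) (hr : IsGreatest {x | p.IsRoot x} r) :
    μ 0 = r := by
  have hroots : {x | p.IsRoot x} = Set.range μ := by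
    ext x
    simp [hp, IsRoot, eval_prod, Finset.prod_eq_zero_iff, sub_eq_zero, @eq_comm _ x]
  rw [hroots] at hr
  obtain ⟨i, hi⟩ := hr.1
  exact le_antisymm (hr.2 ⟨0, rfl⟩) (hi ▸ hμ (Fin.zero_le i))

lemma filter_val_ne_zero_eq_erase (n : ℕ) [NeZero n] :
    Finset.univ.filter (fun i : Fin n => i.val ≠ 0) = Finset.univ.erase 0 := by
  ext i
  simp

end Fin

section IncidenceMatrix

variable {V : Type*} [DecidableEq V] (R : Type*) [CommRing R] (G : SimpleGraph V)

/-- The vertex-edge incidence matrix with columns indexed by the edges of `G` only; the columns of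
`SimpleGraph.incMatrix` range over all of `Sym2 V`. -/
def edgeIncMatrix : Matrix V G.edgeSet R :=
  (G.incMatrix R).submatrix id (↑)

lemma edgeIncMatrix_apply (v : V) (e : G.edgeSet) :
    edgeIncMatrix R G v e = if v ∈ (e : Sym2 V) then 1 else 0 := by
  simp [edgeIncMatrix, SimpleGraph.incMatrix_apply', SimpleGraph.incidenceSet]

variable [Fintype V]

lemma transpose_edgeIncMatrix_mulVec_one : (edgeIncMatrix R G)ᵀ *ᵥ 1 = (2 : R) • 1 := by
  ext e
  simpa [mulVec, dotProduct, edgeIncMatrix] using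
    G.sum_incMatrix_apply_of_mem_edgeSet (R := R) e.2

variable [Fintype G.edgeSet]

lemma edgeIncMatrix_mul_transpose :
    edgeIncMatrix R G * (edgeIncMatrix R G)ᵀ =
      diagonal (fun v => (G.degree v : R)) + G.adjMatrix R := by
  have drop_non_edges : edgeIncMatrix R G * (edgeIncMatrix R G)ᵀ =
      G.incMatrix R * (G.incMatrix R)ᵀ := by
    ext u v
    simp only [mul_apply, transpose_apply]
    refine Fintype.sum_of_injective _ Subtype.val_injective _ _ (fun e he => ?_) fun _ => rfl
    rw [G.incMatrix_of_notMem_incidenceSet fun h => he ⟨⟨e, h.1⟩, rfl⟩, zero_mul]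
  rw [drop_non_edges, SimpleGraph.incMatrix_mul_transpose]
  ext u v
  by_cases huv : u = v <;> simp [huv]

lemma edgeIncMatrix_mulVec_one : edgeIncMatrix R G *ᵥ 1 = fun v => (G.degree v : R) := by
  ext v
  rw [← SimpleGraph.sum_incMatrix_apply]
  simp only [mulVec, dotProduct, Pi.one_apply, mul_one]
  refine Fintype.sum_of_injective _ Subtype.val_injective _ _ (fun e he => ?_) fun _ => rfl
  exact G.incMatrix_of_notMem_incidenceSet fun h => he ⟨⟨e, h.1⟩, rfl⟩

variable {R G} {r : ℕ}

lemma edgeIncMatrix_mulVec_one_of_isRegularOfDegree (hG : G.IsRegularOfDegree r) :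
    edgeIncMatrix R G *ᵥ 1 = (r : R) • 1 := by
  ext v
  simp [edgeIncMatrix_mulVec_one, hG.degree_eq]

lemma sq_smul_edgeIncMatrix_mul_transpose (hG : G.IsRegularOfDegree r) (α : ℝ) :
    (1 - α) ^ 2 • (edgeIncMatrix ℝ G * (edgeIncMatrix ℝ G)ᵀ) =
      (1 - α) • Aalpha G α + ((1 - α) * (r * (1 - 2 * α))) • (1 : Matrix V V ℝ) := by
  rw [edgeIncMatrix_mul_transpose, Aalpha_eq_of_isRegularOfDegree α hG]
  have diagonal_degree : diagonal (fun v => (G.degree v : ℝ)) = (r : ℝ) • (1 : Matrix V V ℝ) := by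
    simp [hG.degree_eq, smul_one_eq_diagonal]
  rw [diagonal_degree]
  module

end IncidenceMatrix

section SubdivisionEdgeJoin

variable {V W : Type*} (G₁ : SimpleGraph V) (G₂ : SimpleGraph W) [DecidableEq V]
  [DecidableEq G₁.edgeSet]

lemma adjMatrix_subdivisionEdgeJoin (R : Type*) [CommRing R] :
    (subdivisionEdgeJoin G₁ G₂).adjMatrix R =
      incidenceJoin 0 0 1 (edgeIncMatrix R G₁) (G₂.adjMatrix R) := by
  have adj_iff (w w' : W) : (¬w = w' ∧ (G₂.Adj w w' ∨ G₂.Adj w' w)) ↔ G₂.Adj w w' := by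
    rw [G₂.adj_comm w' w, or_self, and_iff_right_of_imp SimpleGraph.Adj.ne]
  ext (u | e | w) (u' | e' | w') <;> rw [SimpleGraph.adjMatrix_apply] <;>
    simp [incidenceJoin, subdivisionEdgeJoin, edgeIncMatrix_apply, adj_iff]

variable [Fintype V] [Fintype W] [Fintype G₁.edgeSet]

omit [DecidableEq V] [DecidableEq G₁.edgeSet] in
lemma degree_subdivisionEdgeJoin (R : Type*) [CommRing R] :
    (fun x => ((subdivisionEdgeJoin G₁ G₂).degree x : R)) =
      Sum.elim (fun v => (G₁.degree v : R)) (Sum.elim (fun _ => 2 + (Fintype.card W : R))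
        fun w => Fintype.card G₁.edgeSet + (G₂.degree w : R)) := by
  rw [← adjMatrix_mulVec_one, adjMatrix_subdivisionEdgeJoin, incidenceJoin_mulVec_one,
    edgeIncMatrix_mulVec_one, transpose_edgeIncMatrix_mulVec_one, adjMatrix_mulVec_one]
  ext (v | e | w) <;> simp [-Fintype.card_ofFinset]

variable {G₁ G₂} {r : ℕ}

lemma Aalpha_subdivisionEdgeJoin [DecidableEq W] (hG₁ : G₁.IsRegularOfDegree r) (α : ℝ) :
    Aalpha (subdivisionEdgeJoin G₁ G₂) α =
      incidenceJoin (α * r) (α * (2 + Fintype.card W)) (1 - α) (edgeIncMatrix ℝ G₁)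
        (Aalpha G₂ α + (α * Fintype.card G₁.edgeSet) • (1 : Matrix W W ℝ)) := by
  rw [Aalpha, degree_subdivisionEdgeJoin, adjMatrix_subdivisionEdgeJoin]
  ext (u | e | w) (u' | e' | w') <;>
    simp [incidenceJoin, Aalpha, hG₁.degree_eq, diagonal_apply, one_apply, mul_add, ite_add_zero,
      add_comm, add_left_comm, add_assoc]

end SubdivisionEdgeJoin

section Spectrum

/-- The quadratic factor `G_i` of the spectrum of the join, at an eigenvalue `μ` of `A_α(G₁)`, for
`G₁` regular of degree `r` and `G₂` of order `n`. -/
def edgeJoinQuadratic (α r n μ : ℝ) : ℝ[X] :=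
  X ^ 2 - C (α * (2 + r + n)) * X + C (α ^ 2 * r * n + 3 * α * r - r - (1 - α) * μ)

/-- The cubic factor `F` of the spectrum of the join, for `G₁` regular of degree `r` with `m` edges
and `G₂` regular of degree `s` and order `n`. -/
def edgeJoinCubic (α r m n s : ℝ) : ℝ[X] :=
  (X - C (α * m + s)) * (X ^ 2 - C (α * (2 + r + n)) * X + C (r * (α ^ 2 * n + 4 * α - 2))) -
    C (m * n * (1 - α) ^ 2) * (X - C (α * r))

lemma edgeJoinQuadratic_eq (α r n μ : ℝ) :
    edgeJoinQuadratic α r n μ = (X - C (α * r)) * (X - C (α * (2 + n))) -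
      C ((1 - α) * μ + (1 - α) * (r * (1 - 2 * α))) := by
  simp only [edgeJoinQuadratic, map_sub, map_add, map_mul, map_pow, map_one, map_ofNat]
  ring

lemma edgeJoinQuadratic_one_two_mul_sub_one (α n : ℝ) :
    edgeJoinQuadratic α 1 n (2 * α - 1) = (X - C α) * (X - C (α * (2 + n))) := by
  simp only [edgeJoinQuadratic, map_sub, map_add, map_mul, map_pow, map_one, map_ofNat]
  ring

lemma edgeJoinCubic_eq (α r m n s : ℝ) :
    edgeJoinCubic α r m n s = (X - C (α * m + s)) * edgeJoinQuadratic α r n r -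
      C ((1 - α) ^ 2 * (m * n)) * (X - C (α * r)) := by
  simp only [edgeJoinCubic, edgeJoinQuadratic, map_sub, map_add, map_mul, map_pow, map_one,
    map_ofNat]
  ring

lemma edgeJoinCubic_one_one (α n s : ℝ) :
    edgeJoinCubic α 1 1 n s =
      (X - C (α + s)) * (X ^ 2 - C (α * (3 + n)) * X + C (α ^ 2 * n + 4 * α - 2)) -
        C (n * (1 - α) ^ 2) * (X - C α) := by
  rw [edgeJoinCubic, mul_one, one_mul, one_mul, two_add_one_eq_three]

lemma monic_edgeJoinQuadratic (α r n μ : ℝ) : (edgeJoinQuadratic α r n μ).Monic := by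
  unfold edgeJoinQuadratic
  monicity!

variable {V W ι κ : Type*} [Fintype V] [Fintype W] {G₁ : SimpleGraph V} {G₂ : SimpleGraph W}
  [Fintype G₁.edgeSet] {r₁ r₂ : ℕ}

lemma card_mul_degree_eq_two_mul_card_edgeSet (hreg₁ : G₁.IsRegularOfDegree r₁) :
    Fintype.card V * r₁ = 2 * Fintype.card G₁.edgeSet := by
  have h := card_mul_eq_card_mul_of_mulVec_one (edgeIncMatrix_mulVec_one_of_isRegularOfDegree hreg₁)
    (transpose_edgeIncMatrix_mulVec_one ℝ G₁)
  rw [mul_comm 2]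
  exact_mod_cast h

lemma card_eq_two_and_card_edgeSet_eq_one (hconn₁ : G₁.Connected)
    (hreg₁ : G₁.IsRegularOfDegree 1) : Fintype.card V = 2 ∧ Fintype.card G₁.edgeSet = 1 := by
  have handshake := card_mul_degree_eq_two_mul_card_edgeSet hreg₁
  have tree_bound := hconn₁.card_vert_le_card_edgeSet_add_one
  have := hconn₁.nonempty
  have card_pos : 0 < Fintype.card V := Fintype.card_pos
  rw [Nat.card_eq_fintype_card, Nat.card_eq_fintype_card] at tree_bound
  omega

variable [DecidableEq V] [DecidableEq W] [DecidableEq G₁.edgeSet] [Fintype ι] [Fintype κ]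
  [DecidableEq ι] [DecidableEq κ] {α : ℝ} {μ₁ : ι → ℝ} {μ₂ : κ → ℝ} {i₁ : ι} {i₂ : κ}

lemma pow_mul_charpoly_Aalpha_subdivisionEdgeJoin
    (hreg₁ : G₁.IsRegularOfDegree r₁) (hreg₂ : G₂.IsRegularOfDegree r₂)
    (hμ₁ : (Aalpha G₁ α).charpoly = ∏ i, (X - C (μ₁ i))) (hi₁ : μ₁ i₁ = r₁)
    (hμ₂ : (Aalpha G₂ α).charpoly = ∏ i, (X - C (μ₂ i))) (hi₂ : μ₂ i₂ = r₂) :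
    (X - C (α * (2 + Fintype.card W))) ^ Fintype.card V *
        (Aalpha (subdivisionEdgeJoin G₁ G₂) α).charpoly =
      (X - C (α * (2 + Fintype.card W))) ^ Fintype.card G₁.edgeSet *
        ((∏ i ∈ Finset.univ.erase i₂, (X - C (α * Fintype.card G₁.edgeSet + μ₂ i))) *
          (∏ i ∈ Finset.univ.erase i₁, edgeJoinQuadratic α r₁ (Fintype.card W) (μ₁ i)) *
          edgeJoinCubic α r₁ (Fintype.card G₁.edgeSet) (Fintype.card W) r₂) := by
  set m := Fintype.card G₁.edgeSet
  set n := Fintype.card W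
  have hN : (Aalpha G₂ α + (α * m) • (1 : Matrix W W ℝ)) *ᵥ 1 = (α * m + r₂) • 1 := by
    rw [add_mulVec, smul_mulVec, one_mulVec, Aalpha_mulVec_one_of_isRegularOfDegree α hreg₂,
      ← add_smul, add_comm]
  have charpoly_join := charpoly_incidenceJoin (α * r₁) (α * (2 + n)) (1 - α)
    (edgeIncMatrix_mulVec_one_of_isRegularOfDegree hreg₁)
    (transpose_edgeIncMatrix_mulVec_one ℝ G₁) hN
  have charpoly_gram := charpoly_smul_add_smul_one hμ₁ (1 - α) ((1 - α) * (r₁ * (1 - 2 * α)))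
  have charpoly_N := charpoly_smul_add_smul_one hμ₂ 1 (α * m)
  have hquad : (X - C (α * r₁)) * (X - C (α * (2 + (n : ℝ)))) - C ((1 - α) ^ 2 * (2 * r₁)) =
      edgeJoinQuadratic α r₁ n r₁ := by
    rw [edgeJoinQuadratic_eq]
    ring_nf
  rw [← sq_smul_edgeIncMatrix_mul_transpose hreg₁] at charpoly_gram
  rw [one_smul] at charpoly_N
  rw [← Aalpha_subdivisionEdgeJoin hreg₁, charpoly_gram, charpoly_N, hquad, prod_comp]
    at charpoly_join
  simp only [sub_comp, X_comp, C_comp, ← edgeJoinQuadratic_eq, one_mul, ← add_comm (α * m)]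
    at charpoly_join
  rw [← Finset.mul_prod_erase _ _ (Finset.mem_univ i₁),
    ← Finset.mul_prod_erase _ _ (Finset.mem_univ i₂), hi₁, hi₂] at charpoly_join
  refine mul_left_cancel₀ (mul_ne_zero (monic_edgeJoinQuadratic α r₁ n r₁).ne_zero
    (X_sub_C_ne_zero (α * m + r₂))) ?_
  rw [edgeJoinCubic_eq]
  linear_combination charpoly_join

lemma charpoly_Aalpha_subdivisionEdgeJoin_of_two_le (hr₁ : 2 ≤ r₁)
    (hreg₁ : G₁.IsRegularOfDegree r₁) (hreg₂ : G₂.IsRegularOfDegree r₂)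
    (hμ₁ : (Aalpha G₁ α).charpoly = ∏ i, (X - C (μ₁ i))) (hi₁ : μ₁ i₁ = r₁)
    (hμ₂ : (Aalpha G₂ α).charpoly = ∏ i, (X - C (μ₂ i))) (hi₂ : μ₂ i₂ = r₂) :
    (Aalpha (subdivisionEdgeJoin G₁ G₂) α).charpoly =
      (X - C (α * (2 + Fintype.card W))) ^ (Fintype.card G₁.edgeSet - Fintype.card V) *
        (∏ i ∈ Finset.univ.erase i₂, (X - C (α * Fintype.card G₁.edgeSet + μ₂ i))) *
        (∏ i ∈ Finset.univ.erase i₁, edgeJoinQuadratic α r₁ (Fintype.card W) (μ₁ i)) *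
        edgeJoinCubic α r₁ (Fintype.card G₁.edgeSet) (Fintype.card W) r₂ := by
  have hcard : Fintype.card V ≤ Fintype.card G₁.edgeSet := by
    nlinarith [card_mul_degree_eq_two_mul_card_edgeSet hreg₁]
  have h := pow_mul_charpoly_Aalpha_subdivisionEdgeJoin hreg₁ hreg₂ hμ₁ hi₁ hμ₂ hi₂
  rw [← pow_mul_pow_sub _ hcard, mul_assoc] at h
  rw [mul_left_cancel₀ (pow_ne_zero _ (X_sub_C_ne_zero _)) h]
  ring

omit [DecidableEq ι] in
lemma charpoly_Aalpha_subdivisionEdgeJoin_of_degree_one (hconn₁ : G₁.Connected)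
    (hreg₁ : G₁.IsRegularOfDegree 1) (hreg₂ : G₂.IsRegularOfDegree r₂)
    (hμ₁ : (Aalpha G₁ α).charpoly = ∏ i, (X - C (μ₁ i))) (hi₁ : μ₁ i₁ = (1 : ℕ))
    (hμ₂ : (Aalpha G₂ α).charpoly = ∏ i, (X - C (μ₂ i))) (hi₂ : μ₂ i₂ = r₂) :
    (Aalpha (subdivisionEdgeJoin G₁ G₂) α).charpoly =
      (X - C α) * (∏ i ∈ Finset.univ.erase i₂, (X - C (α + μ₂ i))) *
        edgeJoinCubic α 1 1 (Fintype.card W) r₂ := by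
  obtain ⟨hV, hE⟩ := card_eq_two_and_card_edgeSet_eq_one hconn₁ hreg₁
  obtain ⟨j, hj⟩ : ∃ j, Finset.univ.erase i₁ = {j} := by
    rw [← Finset.card_eq_one, Finset.card_erase_of_mem (Finset.mem_univ i₁),
      ← card_eq_of_charpoly_eq_prod hμ₁, hV]
  have hμj : μ₁ j = 2 * α - 1 := by
    have trace_eq := (trace_Aalpha G₁ α).symm.trans (trace_eq_sum_of_charpoly_eq_prod hμ₁)
    rw [← Finset.add_sum_erase _ _ (Finset.mem_univ i₁), hj, Finset.sum_singleton, hi₁] at trace_eq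
    have degree_sum : ∑ v, (G₁.degree v : ℝ) = 2 := by simp [hreg₁.degree_eq, hV]
    rw [degree_sum, Nat.cast_one] at trace_eq
    linarith
  have h := pow_mul_charpoly_Aalpha_subdivisionEdgeJoin hreg₁ hreg₂ hμ₁ hi₁ hμ₂ hi₂
  rw [hV, hE, hj, Finset.prod_singleton, hμj, Nat.cast_one,
    edgeJoinQuadratic_one_two_mul_sub_one, mul_one] at h
  refine mul_left_cancel₀ (pow_ne_zero 2 (X_sub_C_ne_zero (α * (2 + Fintype.card W)))) ?_
  linear_combination h

theorem Aalpha_spectrum_subdivisionEdgeJoin_regular_general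
    (hreg₁ : G₁.IsRegularOfDegree r₁) (hreg₂ : G₂.IsRegularOfDegree r₂)
    (hμ₁ : (Aalpha G₁ α).charpoly = ∏ i, (X - C (μ₁ i))) (hi₁ : μ₁ i₁ = r₁)
    (hμ₂ : (Aalpha G₂ α).charpoly = ∏ i, (X - C (μ₂ i))) (hi₂ : μ₂ i₂ = r₂) :
    (r₁ = 1 → G₁.Connected →
      (Aalpha (subdivisionEdgeJoin G₁ G₂) α).charpoly =
        (X - C α) * (∏ i ∈ Finset.univ.erase i₂, (X - C (α + μ₂ i))) *
          edgeJoinCubic α 1 1 (Fintype.card W) r₂) ∧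
    (2 ≤ r₁ →
      (Aalpha (subdivisionEdgeJoin G₁ G₂) α).charpoly =
        (X - C (α * (2 + Fintype.card W))) ^ (Fintype.card G₁.edgeSet - Fintype.card V) *
          (∏ i ∈ Finset.univ.erase i₂, (X - C (α * Fintype.card G₁.edgeSet + μ₂ i))) *
          (∏ i ∈ Finset.univ.erase i₁, edgeJoinQuadratic α r₁ (Fintype.card W) (μ₁ i)) *
          edgeJoinCubic α r₁ (Fintype.card G₁.edgeSet) (Fintype.card W) r₂) := by
  refine ⟨?_, fun hr₁ => charpoly_Aalpha_subdivisionEdgeJoin_of_two_le hr₁ hreg₁ hreg₂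
    hμ₁ hi₁ hμ₂ hi₂⟩
  rintro rfl hconn₁
  exact charpoly_Aalpha_subdivisionEdgeJoin_of_degree_one hconn₁ hreg₁ hreg₂ hμ₁ hi₁ hμ₂ hi₂

end Spectrum

/-- Corollary: the `A_α`-spectrum (as the factorization of the `A_α`-characteristic
polynomial) of the subdivision-edge join `G₁ ∨̲ G₂` of an `r₁`-regular graph `G₁`
and an `r₂`-regular graph `G₂`, in the cases `r₁ = 1` and `r₁ ≥ 2`. -/
theorem Aalpha_spectrum_subdivisionEdgeJoin_regular
    {n₁ m₁ n₂ r₁ r₂ : ℕ} (G₁ : SimpleGraph (Fin n₁)) (G₂ : SimpleGraph (Fin n₂))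
    (hconn₁ : G₁.Connected) (hconn₂ : G₂.Connected)
    (hreg₁ : G₁.IsRegularOfDegree r₁) (hreg₂ : G₂.IsRegularOfDegree r₂)
    (hm : Fintype.card G₁.edgeSet = m₁)
    (α : ℝ) (hα : α ∈ Set.Icc (0 : ℝ) 1)
    (μ₁ : Fin n₁ → ℝ) (hμ₁ : Antitone μ₁)
    (hμ₁ch : (Aalpha G₁ α).charpoly = ∏ i, (X - C (μ₁ i)))
    (μ₂ : Fin n₂ → ℝ) (hμ₂ : Antitone μ₂)
    (hμ₂ch : (Aalpha G₂ α).charpoly = ∏ i, (X - C (μ₂ i))) :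
    (r₁ = 1 →
      (Aalpha (subdivisionEdgeJoin G₁ G₂) α).charpoly =
        (X - C α) *
        (∏ i ∈ Finset.univ.filter (fun i : Fin n₂ => i.val ≠ 0),
          (X - C (α + μ₂ i))) *
        ((X - C (α + r₂)) *
            (X ^ 2 - C (α * (3 + n₂)) * X + C (α ^ 2 * n₂ + 4 * α - 2))
          - C (n₂ * (1 - α) ^ 2) * (X - C α))) ∧
    (2 ≤ r₁ →
      (Aalpha (subdivisionEdgeJoin G₁ G₂) α).charpoly =
        (X - C (α * (2 + n₂))) ^ (m₁ - n₁) *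
        (∏ i ∈ Finset.univ.filter (fun i : Fin n₂ => i.val ≠ 0),
          (X - C (α * m₁ + μ₂ i))) *
        (∏ i ∈ Finset.univ.filter (fun i : Fin n₁ => i.val ≠ 0),
          (X ^ 2 - C (α * (2 + r₁ + n₂)) * X
            + C (α ^ 2 * r₁ * n₂ + 3 * α * r₁ - r₁ - (1 - α) * μ₁ i))) *
        ((X - C (α * m₁ + r₂)) *
            (X ^ 2 - C (α * (2 + r₁ + n₂)) * X + C (r₁ * (α ^ 2 * n₂ + 4 * α - 2)))
          - C (m₁ * n₂ * (1 - α) ^ 2) * (X - C (α * r₁)))) := by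
  have : NeZero n₁ := .of_pos (Fin.pos_iff_nonempty.2 hconn₁.nonempty)
  have : NeZero n₂ := .of_pos (Fin.pos_iff_nonempty.2 hconn₂.nonempty)
  have top₁ := apply_zero_eq_of_isGreatest_isRoot hμ₁ hμ₁ch
    (isGreatest_isRoot_charpoly_Aalpha hreg₁ hα.2)
  have top₂ := apply_zero_eq_of_isGreatest_isRoot hμ₂ hμ₂ch
    (isGreatest_isRoot_charpoly_Aalpha hreg₂ hα.2)
  have h := Aalpha_spectrum_subdivisionEdgeJoin_regular_general hreg₁ hreg₂ hμ₁ch top₁ hμ₂ch top₂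
  rw [hm, Fintype.card_fin, Fintype.card_fin, edgeJoinCubic_one_one] at h
  rw [filter_val_ne_zero_eq_erase, filter_val_ne_zero_eq_erase]
  exact h.imp_left fun h' hr₁ => h' hr₁ hconn₁
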